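/- arXiv:2307.10448 — 4 statements merged into one kernel-verified Lean document; each statement's English description precedes it below -/
import Mathlib

section
/- Let G be a real m-by-n matrix, d ∈ ℝ^m, λ > 0, let D be a real l-by-n matrix, let ω_1,…,ω_l be positive reals and p_1,…,p_l reals with p_j ≥ 1 for every j. If the only vector u ∈ ℝ^n satisfying Gu = 0 and Du = 0 is u = 0, then the objective functional J(u) = ‖d − Gu‖₂² + λ · Σ_{j=1}^{l} ω_j |(Du)_j|^{p_j} attains a global minimum on ℝ^n, i.e., there exists u* ∈ ℝ^n with J(u*) ≤ J(u) for all u ∈ ℝ^n. -/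
/-!
Since `c * |x| ^ p = |c ^ p⁻¹ * x| ^ p`, the weights can be absorbed into the rows of `D`. Stacking
these on `G` gives one linear map `A`, and the objective becomes `u ↦ ∑ k, |a k - A u k| ^ q k`.
As a function of `A u ∈ ℝ^κ` this is continuous and coercive, and the range of `A` is a closed
subspace, so the minimum over that range is attained; any preimage of it is a minimizer.
-/

open Filter Set

theorem tendsto_sum_apply_cocompact_atTop {κ R : Type*} [Fintype κ] [AddCommGroup R]
    [PartialOrder R] [IsOrderedAddMonoid R] {X : κ → Type*} [∀ k, TopologicalSpace (X k)]
    {f : ∀ k, X k → R} (hbdd : ∀ k, BddBelow (range (f k)))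
    (hf : ∀ k, Tendsto (f k) (cocompact (X k)) atTop) :
    Tendsto (fun x : ∀ k, X k ↦ ∑ k, f k (x k)) (cocompact (∀ k, X k)) atTop := by
  classical
  choose b hb using hbdd
  have b_le (k : κ) (x : X k) : b k ≤ f k x := hb k (mem_range_self x)
  rw [← coprodᵢ_cocompact, Filter.coprodᵢ, tendsto_iSup]
  intro k
  have rest_ge (x : ∀ k, X k) : ∑ j ∈ Finset.univ.erase k, b j ≤
      ∑ j ∈ Finset.univ.erase k, f j (x j) := Finset.sum_le_sum fun j _ ↦ b_le j (x j)
  simp only [← Finset.add_sum_erase Finset.univ _ (Finset.mem_univ k)]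
  exact tendsto_atTop_add_right_of_le _ _ ((hf k).comp tendsto_comap) rest_ge

theorem exists_forall_comp_linearMap_le {𝕜 E V α : Type*} [NontriviallyNormedField 𝕜]
    [CompleteSpace 𝕜] [AddCommGroup E] [Module 𝕜 E] [AddCommGroup V] [Module 𝕜 V]
    [TopologicalSpace V] [IsTopologicalAddGroup V] [ContinuousSMul 𝕜 V] [T2Space V]
    [FiniteDimensional 𝕜 V] [LinearOrder α] [TopologicalSpace α] [ClosedIicTopology α]
    {f : V → α} (hf : Continuous f) (hlim : Tendsto f (cocompact V) atTop) (A : E →ₗ[𝕜] V) :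
    ∃ u, ∀ v, f (A u) ≤ f (A v) := by
  have range_closed : IsClosed (LinearMap.range A : Set V) :=
    Submodule.closed_of_finiteDimensional _
  obtain ⟨⟨_, u, rfl⟩, hu⟩ := (hf.comp continuous_subtype_val).exists_forall_le
    (hlim.comp range_closed.isClosedEmbedding_subtypeVal.tendsto_cocompact)
  exact ⟨u, fun v ↦ hu ⟨A v, v, rfl⟩⟩

theorem tendsto_abs_sub_rpow_cocompact_atTop (a : ℝ) {q : ℝ} (hq : 0 < q) :
    Tendsto (fun x : ℝ ↦ |a - x| ^ q) (cocompact ℝ) atTop :=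
  (tendsto_rpow_atTop hq).comp <|
    (tendsto_norm_cocompact_atTop (E := ℝ)).comp
      (Homeomorph.subLeft a).isClosedEmbedding.tendsto_cocompact

theorem exists_forall_sum_abs_sub_rpow_le {E κ : Type*} [AddCommGroup E] [Module ℝ E] [Fintype κ]
    (A : E →ₗ[ℝ] κ → ℝ) (a : κ → ℝ) {q : κ → ℝ} (hq : ∀ k, 0 < q k) :
    ∃ u, ∀ v, ∑ k, |a k - A u k| ^ q k ≤ ∑ k, |a k - A v k| ^ q k := by
  have sum_continuous : Continuous fun x : κ → ℝ ↦ ∑ k, |a k - x k| ^ q k :=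
    continuous_finsetSum _ fun k _ ↦
      (continuous_const.sub (continuous_apply k)).abs.rpow_const fun _ ↦ Or.inr (hq k).le
  have terms_bddBelow (k : κ) : BddBelow (range fun x : ℝ ↦ |a k - x| ^ q k) :=
    ⟨0, forall_mem_range.2 fun x ↦ Real.rpow_nonneg (abs_nonneg _) _⟩
  exact exists_forall_comp_linearMap_le sum_continuous
    (tendsto_sum_apply_cocompact_atTop terms_bddBelow
      fun k ↦ tendsto_abs_sub_rpow_cocompact_atTop (a k) (hq k)) A

theorem abs_rpow_inv_mul_rpow {c p : ℝ} (hc : 0 ≤ c) (hp : p ≠ 0) (x : ℝ) :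
    |c ^ p⁻¹ * x| ^ p = c * |x| ^ p := by
  rw [abs_mul, Real.mul_rpow (abs_nonneg _) (abs_nonneg _),
    abs_of_nonneg (Real.rpow_nonneg hc _), Real.rpow_inv_rpow hc hp]

theorem stmt_2_general {E κ ι : Type*} [AddCommGroup E] [Module ℝ E] [Fintype κ] [Fintype ι]
    (G : E →ₗ[ℝ] κ → ℝ) (d : κ → ℝ) {lam : ℝ} (hlam : 0 ≤ lam) (D : E →ₗ[ℝ] ι → ℝ)
    {ω p : ι → ℝ} (hω : ∀ j, 0 ≤ ω j) (hp : ∀ j, 0 < p j) :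
    ∃ ustar : E, ∀ u : E, (∑ i, (d i - G ustar i) ^ 2) + lam * ∑ j, ω j * |D ustar j| ^ p j
      ≤ (∑ i, (d i - G u i) ^ 2) + lam * ∑ j, ω j * |D u j| ^ p j := by
  let A : E →ₗ[ℝ] κ ⊕ ι → ℝ := LinearMap.pi <| Sum.elim
    (fun i ↦ LinearMap.proj i ∘ₗ G)
    (fun j ↦ (lam * ω j) ^ (p j)⁻¹ • (LinearMap.proj j ∘ₗ D))
  let a : κ ⊕ ι → ℝ := Sum.elim d 0
  let q : κ ⊕ ι → ℝ := Sum.elim 2 p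
  have hq : ∀ k, 0 < q k := Sum.rec (fun _ ↦ two_pos) hp
  have objective_eq (u : E) : ∑ k, |a k - A u k| ^ q k =
      (∑ i, (d i - G u i) ^ 2) + lam * ∑ j, ω j * |D u j| ^ p j := by
    have data_term (i : κ) : |a (.inl i) - A u (.inl i)| ^ q (.inl i) = (d i - G u i) ^ 2 := by
      simp [A, a, q]
    have penalty_term (j : ι) :
        |a (.inr j) - A u (.inr j)| ^ q (.inr j) = lam * (ω j * |D u j| ^ p j) := by
      rw [← mul_assoc, ← abs_rpow_inv_mul_rpow (mul_nonneg hlam (hω j)) (hp j).ne']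
      simp [A, a, q]
    simp only [Fintype.sum_sum_type, data_term, penalty_term, Finset.mul_sum]
  simpa only [objective_eq] using exists_forall_sum_abs_sub_rpow_le A a hq

/-- If the kernels of `G` and `D` intersect trivially, then the objective
`J(u) = ‖d − Gu‖₂² + λ ∑ j ω j |(Du)_j|^(p j)` (with `λ > 0`, positive weights and
exponents `p j ≥ 1`) attains a global minimum on `ℝ^n`. -/
theorem stmt_2 (m n l : ℕ) (G : Matrix (Fin m) (Fin n) ℝ) (d : Fin m → ℝ)
    (lam : ℝ) (hlam : 0 < lam) (D : Matrix (Fin l) (Fin n) ℝ)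
    (ω p : Fin l → ℝ) (hω : ∀ j, 0 < ω j) (hp : ∀ j, 1 ≤ p j)
    (hker : ∀ u : Fin n → ℝ, G.mulVec u = 0 → D.mulVec u = 0 → u = 0) :
    ∃ ustar : Fin n → ℝ, ∀ u : Fin n → ℝ,
      (∑ i, (d i - G.mulVec ustar i) ^ 2)
          + lam * ∑ j, ω j * |D.mulVec ustar j| ^ (p j)
        ≤ (∑ i, (d i - G.mulVec u i) ^ 2)
          + lam * ∑ j, ω j * |D.mulVec u j| ^ (p j) :=
  stmt_2_general G.mulVecLin d hlam.le D.mulVecLin (fun j ↦ (hω j).le)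
    fun j ↦ zero_lt_one.trans_le (hp j)
end

section
/- Let k be a positive integer, p ≥ 1, c > 0, and x ∈ ℝ^k with x ≠ 0. If t* ∈ ℝ is a global minimizer over ℝ of the scalar function t ↦ |t|^p + (c/2)(t − ‖x‖₂)², then the vector v* = t* · x / ‖x‖₂ is a global minimizer over ℝ^k of the function v ↦ ‖v‖₂^p + (c/2)‖v − x‖₂². -/
/-!
On the line spanned by a unit vector in the direction of `x`, the objective on the whole space
restricts to the scalar one. Off this line, the reverse triangle inequality
`|‖v‖ - ‖x‖| ≤ ‖v - x‖` bounds the objective at `v` below by the scalar objective at `‖v‖`.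
-/

section RadialMinimization

variable {E : Type*} [SeminormedAddCommGroup E] [NormedSpace ℝ E] {u x : E}

theorem norm_smul_of_norm_eq_one (hu : ‖u‖ = 1) (t : ℝ) : ‖t • u‖ = |t| := by
  rw [norm_smul, hu, mul_one, Real.norm_eq_abs]

theorem norm_smul_sub_of_norm_smul_eq (hu : ‖u‖ = 1) (hx : ‖x‖ • u = x) (t : ℝ) :
    ‖t • u - x‖ = |t - ‖x‖| := by
  calc
    ‖t • u - x‖ = ‖(t - ‖x‖) • u‖ := by rw [sub_smul, hx]
    _ = |t - ‖x‖| := norm_smul_of_norm_eq_one hu _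

theorem stmt_7_general {β : Type*} [Preorder β] [Add β] [AddLeftMono β] {φ ψ : ℝ → β}
    (hψ : MonotoneOn ψ (Set.Ici 0)) (hu : ‖u‖ = 1) (hx : ‖x‖ • u = x) {s : ℝ}
    (hs : IsMinOn (fun t ↦ φ |t| + ψ |t - ‖x‖|) Set.univ s) :
    IsMinOn (fun v ↦ φ ‖v‖ + ψ ‖v - x‖) Set.univ (s • u) := by
  refine isMinOn_univ_iff.mpr fun v ↦ ?_
  calc
    φ ‖s • u‖ + ψ ‖s • u - x‖ = φ |s| + ψ |s - ‖x‖| := by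
      rw [norm_smul_of_norm_eq_one hu, norm_smul_sub_of_norm_smul_eq hu hx]
    _ ≤ φ |‖v‖| + ψ |‖v‖ - ‖x‖| := isMinOn_univ_iff.mp hs ‖v‖
    _ = φ ‖v‖ + ψ |‖v‖ - ‖x‖| := by rw [abs_norm]
    _ ≤ φ ‖v‖ + ψ ‖v - x‖ := by
      gcongr
      exact hψ (Set.mem_Ici.mpr <| abs_nonneg _) (Set.mem_Ici.mpr <| norm_nonneg _)
        (abs_norm_sub_norm_le v x)

end RadialMinimization

theorem monotoneOn_const_mul_sq {a : ℝ} (ha : 0 ≤ a) :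
    MonotoneOn (fun r : ℝ ↦ a * r ^ 2) (Set.Ici 0) :=
  fun _ hr _ _ hrs ↦ mul_le_mul_of_nonneg_left (pow_le_pow_left₀ hr hrs 2) ha

/-- Norm-composition rule for the proximal operator: if `t*` globally minimizes
`t ↦ |t|^p + (c/2)(t − ‖x‖₂)²` on `ℝ`, then `v* = t* • x/‖x‖₂` globally minimizes
`v ↦ ‖v‖₂^p + (c/2)‖v − x‖₂²` on `ℝ^k` (for `x ≠ 0`). -/
theorem stmt_7 (k : ℕ) (hk : 0 < k) (p c : ℝ) (hp : 1 ≤ p) (hc : 0 < c)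
    (x : EuclideanSpace ℝ (Fin k)) (hx : x ≠ 0) (tstar : ℝ)
    (htstar : ∀ t : ℝ,
      |tstar| ^ p + (c / 2) * (tstar - ‖x‖) ^ 2
        ≤ |t| ^ p + (c / 2) * (t - ‖x‖) ^ 2) :
    ∀ v : EuclideanSpace ℝ (Fin k),
      ‖tstar • (‖x‖⁻¹ • x)‖ ^ p + (c / 2) * ‖tstar • (‖x‖⁻¹ • x) - x‖ ^ 2
        ≤ ‖v‖ ^ p + (c / 2) * ‖v - x‖ ^ 2 := by
  have hmin : IsMinOn (fun t ↦ |t| ^ p + c / 2 * |t - ‖x‖| ^ 2) Set.univ tstar :=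
    isMinOn_univ_iff.mpr <| by simpa only [sq_abs] using htstar
  exact isMinOn_univ_iff.mp <| stmt_7_general (φ := (· ^ p))
    (monotoneOn_const_mul_sq (half_pos hc).le) (NormedSpace.norm_normalize hx)
    (NormedSpace.norm_smul_normalize x) hmin
end

section
/- Let p ≥ 1, c > 0, and q ≥ 0. If t* ∈ ℝ is a global minimizer of the function t ↦ |t|^p + (c/2)(t − q)², then 0 ≤ t* ≤ q. -/
/-!
If `x` is off the segment from `0` to `q`, then its nearest point `v` on the segment is strictly
closer than `x` to both endpoints. Thus `v` has smaller norm and smaller distance to `q`, and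
replacing `x` by `v` strictly decreases the objective.
-/

open Set
open scoped RealInnerProductSpace

section InnerProductSpace

variable {E : Type*} [NormedAddCommGroup E] [InnerProductSpace ℝ E]

theorem norm_sub_lt_norm_sub_of_inner_nonpos {u v w : E} (huv : u ≠ v)
    (hinner : ⟪u - v, w - v⟫ ≤ 0) : ‖v - w‖ < ‖u - w‖ := by
  have hpos : 0 < ‖u - v‖ ^ 2 := pow_pos (norm_sub_pos_iff.mpr huv) 2
  have hexpand : ‖u - w‖ ^ 2 = ‖u - v‖ ^ 2 - 2 * ⟪u - v, w - v⟫ + ‖v - w‖ ^ 2 := by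
    simpa only [sub_sub_sub_cancel_right, norm_sub_rev w v] using norm_sub_sq_real (u - v) (w - v)
  exact lt_of_pow_lt_pow_left₀ 2 (norm_nonneg _) (by linarith)

theorem exists_mem_forall_norm_sub_lt_of_notMem {K : Set E} (hne : K.Nonempty)
    (hcomplete : IsComplete K) (hconvex : Convex ℝ K) {u : E} (hu : u ∉ K) :
    ∃ v ∈ K, ∀ w ∈ K, ‖v - w‖ < ‖u - w‖ := by
  obtain ⟨v, hv, hmin⟩ := exists_norm_eq_iInf_of_complete_convex hne hcomplete hconvex u
  have hinner := (norm_eq_iInf_iff_real_inner_le_zero hconvex hv).mp hmin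
  have huv : u ≠ v := (ne_of_mem_of_not_mem hv hu).symm
  exact ⟨v, hv, fun w hw ↦ norm_sub_lt_norm_sub_of_inner_nonpos huv (hinner w hw)⟩

theorem exists_norm_lt_and_norm_sub_lt_of_notMem_segment {x q : E} (hx : x ∉ segment ℝ 0 q) :
    ∃ v : E, ‖v‖ < ‖x‖ ∧ ‖v - q‖ < ‖x - q‖ := by
  have hcompact : IsCompact (segment ℝ 0 q) := by
    rw [← convexHull_pair]
    exact (toFinite _).isCompact_convexHull ℝ
  obtain ⟨v, -, hcloser⟩ := exists_mem_forall_norm_sub_lt_of_notMem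
    ⟨0, left_mem_segment ℝ 0 q⟩ hcompact.isComplete (convex_segment 0 q) hx
  exact ⟨v, by simpa only [sub_zero] using hcloser 0 (left_mem_segment ℝ 0 q),
    hcloser q (right_mem_segment ℝ 0 q)⟩

theorem mem_segment_of_forall_add_norm_sub_le {φ ψ : ℝ → ℝ} (hφ : MonotoneOn φ (Ici 0))
    (hψ : StrictMonoOn ψ (Ici 0)) {x q : E}
    (hx : ∀ y : E, φ ‖x‖ + ψ ‖x - q‖ ≤ φ ‖y‖ + ψ ‖y - q‖) : x ∈ segment ℝ 0 q := by
  by_contra hmem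
  obtain ⟨v, hnorm, hdist⟩ := exists_norm_lt_and_norm_sub_lt_of_notMem_segment hmem
  have hφv : φ ‖v‖ ≤ φ ‖x‖ := hφ (norm_nonneg v) (norm_nonneg x) hnorm.le
  have hψv : ψ ‖v - q‖ < ψ ‖x - q‖ := hψ (norm_nonneg _) (norm_nonneg _) hdist
  exact (hx v).not_gt (add_lt_add_of_le_of_lt hφv hψv)

theorem stmt_13_general {p c : ℝ} (hp : 0 ≤ p) (hc : 0 < c) {x q : E}
    (hx : ∀ y : E, ‖x‖ ^ p + c / 2 * ‖x - q‖ ^ 2 ≤ ‖y‖ ^ p + c / 2 * ‖y - q‖ ^ 2) :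
    x ∈ segment ℝ 0 q := by
  have hquadratic : StrictMonoOn (fun r : ℝ ↦ c / 2 * r ^ 2) (Ici 0) :=
    (strictMono_mul_left_of_pos (half_pos hc)).comp_strictMonoOn
      (pow_left_strictMonoOn₀ two_ne_zero)
  exact mem_segment_of_forall_add_norm_sub_le
    (Real.monotoneOn_rpow_Ici_of_exponent_nonneg hp) hquadratic hx

end InnerProductSpace

/-- Shrinkage toward zero: for `p ≥ 1`, `c > 0`, `q ≥ 0`, any global minimizer `t*` of
`t ↦ |t|^p + (c/2)(t − q)²` satisfies `0 ≤ t* ≤ q`. -/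
theorem stmt_13 (p c q : ℝ) (hp : 1 ≤ p) (hc : 0 < c) (hq : 0 ≤ q) (tstar : ℝ)
    (htstar : ∀ t : ℝ,
      |tstar| ^ p + (c / 2) * (tstar - q) ^ 2 ≤ |t| ^ p + (c / 2) * (t - q) ^ 2) :
    0 ≤ tstar ∧ tstar ≤ q := by
  rw [← mem_Icc, ← segment_eq_Icc hq]
  exact stmt_13_general (zero_le_one.trans hp) hc (by simpa only [Real.norm_eq_abs, sq_abs])
end

section
/- Let n, k be positive integers, ρ > 0, and for each i = 1,…,n let ω_i > 0 and p_i ∈ [1,2]; let x = (x_1,…,x_n) with each x_i ∈ ℝ^k. Then the function v = (v_1,…,v_n) ↦ Σ_{i=1}^{n} ω_i ‖v_i‖₂^{p_i} + (ρ/2) Σ_{i=1}^{n} ‖v_i − x_i‖₂² has a unique global minimizer v* on (ℝ^k)^n, and for each i: if x_i = 0 then v*_i = 0; and if x_i ≠ 0 then v*_i = t*_i · x_i / ‖x_i‖₂, where t*_i is the unique global minimizer over ℝ of the scalar function t ↦ |t|^{p_i} + (ρ/(2ω_i))(t − ‖x_i‖₂)². -/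
/-! The penalty `‖v - x‖ ^ 2` is at least `(‖v‖ - ‖x‖) ^ 2`, and in a strictly convex space
equality means that `v` lies on the ray through `x`. Hence, for any `φ`, minimizing
`φ ‖v‖ + c * ‖v - x‖ ^ 2` amounts to minimizing `φ |s| + c * (s - ‖x‖) ^ 2` over the reals and
placing the minimizer on the ray through `x`. Convexity of `φ` enters only in the scalar problem,
whose minimizer exists by coercivity and is unique by strong convexity. -/

open Filter Function Set

/-- `a` is the unique global minimizer of `f`, expressed by a strict inequality at every other
point; for linearly ordered values this says that `a` is a global minimizer and the only one. -/
def IsUniqueMin {α β : Type*} [LT β] (f : α → β) (a : α) : Prop :=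
  ∀ b, b ≠ a → f a < f b

theorem IsUniqueMin.le {α β : Type*} [Preorder β] {f : α → β} {a : α} (h : IsUniqueMin f a)
    (b : α) : f a ≤ f b := by
  obtain rfl | hba := eq_or_ne b a
  exacts [le_rfl, (h b hba).le]

theorem isUniqueMin_iff {α β : Type*} [LinearOrder β] {f : α → β} {a : α} :
    IsUniqueMin f a ↔ (∀ b, f a ≤ f b) ∧ ∀ b, (∀ c, f b ≤ f c) → b = a := by
  constructor
  · intro h
    exact ⟨h.le, fun b hb => by_contra fun hba => (h b hba).not_ge (hb a)⟩
  · rintro ⟨hmin, huniq⟩ b hba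
    by_contra! hle
    exact hba (huniq b fun c => hle.trans (hmin c))

namespace IsUniqueMin

theorem const_mul {α R : Type*} [Mul R] [Zero R] [Preorder R] [PosMulStrictMono R] {f : α → R}
    {a : α} {r : R} (h : IsUniqueMin f a) (hr : 0 < r) : IsUniqueMin (fun b => r * f b) a :=
  fun b hba => mul_lt_mul_of_pos_left (h b hba) hr

theorem sum_pi {ι M : Type*} {α : ι → Type*} [Fintype ι] [AddCommMonoid M] [PartialOrder M]
    [IsOrderedCancelAddMonoid M] {f : ∀ i, α i → M} {a : ∀ i, α i}
    (h : ∀ i, IsUniqueMin (f i) (a i)) : IsUniqueMin (fun b : ∀ i, α i => ∑ i, f i (b i)) a := by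
  intro b hba
  obtain ⟨j, hj⟩ := ne_iff.mp hba
  exact Finset.sum_lt_sum (fun i _ => (h i).le (b i)) ⟨j, Finset.mem_univ j, h j (b j) hj⟩

theorem eq_zero_of_even {α β : Type*} [AddGroup α] [IsAddTorsionFree α] [Preorder β]
    {f : α → β} {a : α} (h : IsUniqueMin f a) (hf : f.Even) : a = 0 := by
  by_contra ha
  exact (h (-a) (neg_eq_self.not.mpr ha)).ne (hf a).symm

section RadialFunction

variable {φ : ℝ → ℝ} {c t : ℝ}

theorem nonneg_of_abs_add_mul_sub_sq {a : ℝ} (hc : 0 ≤ c) (ha : 0 ≤ a)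
    (ht : IsUniqueMin (fun s => φ |s| + c * (s - a) ^ 2) t) : 0 ≤ t := by
  by_contra! hneg
  have hlt := ht (-t) (by linarith)
  have hsq : (-t - a) ^ 2 ≤ (t - a) ^ 2 := by nlinarith
  simp only [abs_neg, add_lt_add_iff_left] at hlt
  exact hlt.not_ge (mul_le_mul_of_nonneg_left hsq hc)

variable {E : Type*} [NormedAddCommGroup E] [NormedSpace ℝ E] [StrictConvexSpace ℝ E] {v x : E}

theorem norm_comp_of_sameRay (hc : 0 < c) (hx : x ≠ 0) (hv : SameRay ℝ v x)
    (hmin : IsUniqueMin (fun s => φ |s| + c * (s - ‖x‖) ^ 2) ‖v‖) :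
    IsUniqueMin (fun w => φ ‖w‖ + c * ‖w - x‖ ^ 2) v := by
  intro w hwv
  have hval : ‖v - x‖ ^ 2 = (‖v‖ - ‖x‖) ^ 2 := by rw [hv.norm_sub, sq_abs]
  simp only [hval]
  obtain hnorm | hnorm := eq_or_ne ‖w‖ ‖v‖
  · have hray : ¬SameRay ℝ w x := fun hw => hwv (norm_injOn_ray_right hx hw hv hnorm)
    have hsq : (‖w‖ - ‖x‖) ^ 2 < ‖w - x‖ ^ 2 :=
      sq_lt_sq.mpr (by simpa only [abs_norm] using not_sameRay_iff_abs_lt_norm_sub.mp hray)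
    rw [← hnorm]
    gcongr
  · have hsq : (‖w‖ - ‖x‖) ^ 2 ≤ ‖w - x‖ ^ 2 :=
      sq_le_sq.mpr (by simpa only [abs_norm] using abs_norm_sub_norm_le w x)
    calc φ ‖v‖ + c * (‖v‖ - ‖x‖) ^ 2 < φ ‖w‖ + c * (‖w‖ - ‖x‖) ^ 2 := by
          simpa only [abs_norm] using hmin ‖w‖ hnorm
      _ ≤ φ ‖w‖ + c * ‖w - x‖ ^ 2 := by gcongr

theorem norm_comp (hc : 0 < c) (ht : IsUniqueMin (fun s => φ |s| + c * (s - ‖x‖) ^ 2) t) :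
    IsUniqueMin (fun w => φ ‖w‖ + c * ‖w - x‖ ^ 2) (t • (‖x‖⁻¹ • x)) := by
  obtain rfl | hx := eq_or_ne x 0
  · have ht₀ : t = 0 := ht.eq_zero_of_even fun s => by simp
    subst ht₀
    intro w hw
    simpa using ht ‖w‖ (by simpa using hw)
  · have ht₀ : 0 ≤ t := ht.nonneg_of_abs_add_mul_sub_sq hc.le (norm_nonneg x)
    have hnorm : ‖t • (‖x‖⁻¹ • x)‖ = t := by
      rw [norm_smul_of_nonneg ht₀, norm_smul, norm_inv, norm_norm,
        inv_mul_cancel₀ (norm_ne_zero_iff.mpr hx), mul_one]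
    refine norm_comp_of_sameRay hc hx ?_ (hnorm.symm ▸ ht)
    exact ((SameRay.refl x).nonneg_smul_left (by positivity)).nonneg_smul_left ht₀

theorem const_mul_norm_comp {ω ρ : ℝ} (hω : 0 < ω) (hρ : 0 < ρ)
    (ht : IsUniqueMin (fun s => φ |s| + ρ / (2 * ω) * (s - ‖x‖) ^ 2) t) :
    IsUniqueMin (fun w => ω * φ ‖w‖ + ρ / 2 * ‖w - x‖ ^ 2) (t • (‖x‖⁻¹ • x)) := by
  have hrescale : ∀ w : E, ω * φ ‖w‖ + ρ / 2 * ‖w - x‖ ^ 2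
      = ω * (φ ‖w‖ + ρ / (2 * ω) * ‖w - x‖ ^ 2) := fun w => by field_simp
  simp only [hrescale]
  exact (norm_comp (by positivity) ht).const_mul hω

end RadialFunction

end IsUniqueMin

theorem tendsto_add_mul_dist_sq_cocompact_atTop {X : Type*} [PseudoMetricSpace X] [ProperSpace X]
    {f : X → ℝ} {c : ℝ} (hf : BddBelow (range f)) (hc : 0 < c) (x : X) :
    Tendsto (fun y => f y + c * dist y x ^ 2) (cocompact X) atTop := by
  obtain ⟨m, hm⟩ := hf
  have hdist : Tendsto (fun y => dist y x ^ 2) (cocompact X) atTop :=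
    (tendsto_pow_atTop two_ne_zero).comp (tendsto_dist_right_cocompact_atTop x)
  exact tendsto_atTop_add_left_of_le _ m (fun y => hm (mem_range_self y))
    (hdist.const_mul_atTop hc)

section InnerProductSpace

variable {E : Type*} [NormedAddCommGroup E] [InnerProductSpace ℝ E] {f : E → ℝ} {c : ℝ}

theorem strongConvexOn_add_mul_norm_sub_sq {s : Set E} (hf : ConvexOn ℝ s f) (c : ℝ) (x : E) :
    StrongConvexOn s (2 * c) fun v => f v + c * ‖v - x‖ ^ 2 := by
  have haffine : ConvexOn ℝ s fun v => (-(2 * c) • innerₛₗ ℝ x) v + c * ‖x‖ ^ 2 :=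
    (LinearMap.convexOn _ hf.1).add_const _
  rw [strongConvexOn_iff_convex]
  refine (hf.add haffine).congr fun v _ => ?_
  simp only [Pi.add_apply, LinearMap.smul_apply, innerₛₗ_apply_apply, smul_eq_mul,
    norm_sub_sq_real, real_inner_comm]
  ring

theorem exists_isUniqueMin_add_mul_norm_sub_sq [FiniteDimensional ℝ E]
    (hf : ConvexOn ℝ univ f) (hbdd : BddBelow (range f)) (hc : 0 < c) (x : E) :
    ∃ v, IsUniqueMin (fun w => f w + c * ‖w - x‖ ^ 2) v := by
  have : ProperSpace E := FiniteDimensional.proper_real E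
  have hcont : Continuous f := continuousOn_univ.mp (hf.continuousOn isOpen_univ)
  have hstrict : StrictConvexOn ℝ univ fun w => f w + c * ‖w - x‖ ^ 2 :=
    (strongConvexOn_add_mul_norm_sub_sq hf c x).strictConvexOn (by positivity)
  have hcoercive : Tendsto (fun w => f w + c * ‖w - x‖ ^ 2) (cocompact E) atTop := by
    simpa only [dist_eq_norm] using tendsto_add_mul_dist_sq_cocompact_atTop hbdd hc x
  obtain ⟨v, hv⟩ := Continuous.exists_forall_le (by fun_prop) hcoercive
  refine ⟨v, isUniqueMin_iff.mpr ⟨hv, fun u hu => ?_⟩⟩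
  exact hstrict.eq_of_isMinOn (fun w _ => hu w) (fun w _ => hv w) (mem_univ u) (mem_univ v)

end InnerProductSpace

theorem convexOn_rpow_of_nonneg {E : Type*} [AddCommMonoid E] [SMul ℝ E] {s : Set E} {f : E → ℝ}
    {p : ℝ} (hf : ConvexOn ℝ s f) (hf₀ : ∀ v ∈ s, 0 ≤ f v) (hp : 1 ≤ p) :
    ConvexOn ℝ s fun v => f v ^ p := by
  refine ⟨hf.1, fun u hu v hv a b ha hb hab => ?_⟩
  calc f (a • u + b • v) ^ p ≤ (a • f u + b • f v) ^ p :=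
        Real.rpow_le_rpow (hf₀ _ (hf.1 hu hv ha hb hab)) (hf.2 hu hv ha hb hab) (by positivity)
    _ ≤ a • f u ^ p + b • f v ^ p := (convexOn_rpow hp).2 (hf₀ u hu) (hf₀ v hv) ha hb hab

theorem exists_isUniqueMin_abs_rpow_add_mul_sub_sq {p c : ℝ} (hp : 1 ≤ p) (hc : 0 < c) (a : ℝ) :
    ∃ t, IsUniqueMin (fun s : ℝ => |s| ^ p + c * (s - a) ^ 2) t := by
  have hconvex : ConvexOn ℝ univ fun s : ℝ => ‖s‖ ^ p :=
    convexOn_rpow_of_nonneg convexOn_univ_norm (fun s _ => norm_nonneg s) hp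
  have hbdd : BddBelow (range fun s : ℝ => ‖s‖ ^ p) :=
    ⟨0, forall_mem_range.mpr fun s => by positivity⟩
  simpa only [Real.norm_eq_abs, sq_abs] using
    exists_isUniqueMin_add_mul_norm_sub_sq hconvex hbdd hc a

theorem stmt_15_general {ι : Type*} [Fintype ι] {E : ι → Type*} [∀ i, NormedAddCommGroup (E i)]
    [∀ i, NormedSpace ℝ (E i)] [∀ i, StrictConvexSpace ℝ (E i)] {ρ : ℝ} (hρ : 0 < ρ)
    {ω p : ι → ℝ} (hω : ∀ i, 0 < ω i) (hp : ∀ i, 1 ≤ p i) (x : ∀ i, E i) :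
    ∃ vstar : ∀ i, E i,
      IsUniqueMin
        (fun v : ∀ i, E i => (∑ i, ω i * ‖v i‖ ^ p i) + ρ / 2 * ∑ i, ‖v i - x i‖ ^ 2) vstar ∧
      ∀ i, (x i = 0 → vstar i = 0) ∧
        (x i ≠ 0 → ∃ tstar : ℝ,
          IsUniqueMin (fun t => |t| ^ p i + ρ / (2 * ω i) * (t - ‖x i‖) ^ 2) tstar ∧
          vstar i = tstar • (‖x i‖⁻¹ • x i)) := by
  have hc : ∀ i, 0 < ρ / (2 * ω i) := fun i => div_pos hρ (mul_pos two_pos (hω i))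
  choose t ht using fun i => exists_isUniqueMin_abs_rpow_add_mul_sub_sq (hp i) (hc i) ‖x i‖
  refine ⟨fun i => t i • (‖x i‖⁻¹ • x i), ?_, fun i => ⟨fun hx => ?_, fun _ => ⟨t i, ht i, rfl⟩⟩⟩
  · simp only [Finset.mul_sum, ← Finset.sum_add_distrib]
    exact IsUniqueMin.sum_pi fun i => (ht i).const_mul_norm_comp (φ := (· ^ p i)) (hω i) hρ
  · simp only [hx, smul_zero]

/-- The ADMM `v`-suboptimization for the weighted inhomogeneous regularization:
for `ρ > 0`, weights `ω i > 0`, exponents `p i ∈ [1,2]`, the function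
`v ↦ ∑ i ω_i ‖v_i‖₂^{p_i} + (ρ/2) ∑ i ‖v_i − x_i‖₂²` has a unique global minimizer
`v*`; moreover `v*_i = 0` when `x_i = 0`, and otherwise `v*_i = t*_i • x_i/‖x_i‖₂`
where `t*_i` is the unique global minimizer of
`t ↦ |t|^{p_i} + (ρ/(2ω_i))(t − ‖x_i‖₂)²`. -/
theorem stmt_15 (n k : ℕ) (hn : 0 < n) (hk : 0 < k) (ρ : ℝ) (hρ : 0 < ρ)
    (ω p : Fin n → ℝ) (hω : ∀ i, 0 < ω i) (hp : ∀ i, p i ∈ Set.Icc (1 : ℝ) 2)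
    (x : Fin n → EuclideanSpace ℝ (Fin k)) :
    ∃ vstar : Fin n → EuclideanSpace ℝ (Fin k),
      (∀ v : Fin n → EuclideanSpace ℝ (Fin k),
          (∑ i, ω i * ‖vstar i‖ ^ (p i)) + (ρ / 2) * ∑ i, ‖vstar i - x i‖ ^ 2
            ≤ (∑ i, ω i * ‖v i‖ ^ (p i)) + (ρ / 2) * ∑ i, ‖v i - x i‖ ^ 2) ∧
      (∀ v : Fin n → EuclideanSpace ℝ (Fin k),
          (∀ w : Fin n → EuclideanSpace ℝ (Fin k),
            (∑ i, ω i * ‖v i‖ ^ (p i)) + (ρ / 2) * ∑ i, ‖v i - x i‖ ^ 2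
              ≤ (∑ i, ω i * ‖w i‖ ^ (p i)) + (ρ / 2) * ∑ i, ‖w i - x i‖ ^ 2) →
          v = vstar) ∧
      (∀ i : Fin n,
        (x i = 0 → vstar i = 0) ∧
        (x i ≠ 0 → ∃ tstar : ℝ,
          (∀ t : ℝ,
              |tstar| ^ (p i) + (ρ / (2 * ω i)) * (tstar - ‖x i‖) ^ 2
                ≤ |t| ^ (p i) + (ρ / (2 * ω i)) * (t - ‖x i‖) ^ 2) ∧
          (∀ t : ℝ,
              (∀ s : ℝ,
                |t| ^ (p i) + (ρ / (2 * ω i)) * (t - ‖x i‖) ^ 2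
                  ≤ |s| ^ (p i) + (ρ / (2 * ω i)) * (s - ‖x i‖) ^ 2) →
              t = tstar) ∧
          vstar i = tstar • (‖x i‖⁻¹ • x i))) := by
  simpa only [isUniqueMin_iff, and_assoc] using stmt_15_general hρ hω (fun i => (hp i).1) x
end
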